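/- Consider the proportional share allocation rule: given a budget B ≥ 0 and n nonnegative bids sorted in nondecreasing order b_1 ≤ b_2 ≤ … ≤ b_n, let k be the largest index in {1,…,n} such that b_k ≤ B/k (set k = 0 if no such index exists). Then for every subset S of {1,…,n} with Σ_{i∈S} b_i ≤ B, the cardinality of S is at most 2k; i.e., the number of winners of the proportional share rule is a 2-approximation to the maximum number of bidders that can be afforded within budget B. -/

import Mathlib

/-!
At most `k` members of an affordable set `S` have index at most `k`. By maximality of `k`, the bid
`b (k + 1)` exceeds `B / (k + 1)`, and every bid of larger index is at least as large, so `k + 1`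
members of index above `k` would already exceed the budget.
-/

section OrderedAddCommMonoid

variable {M : Type*} [AddCommMonoid M]

theorem card_lt_of_sum_lt_nsmul {ι : Type*} [Preorder M] [AddLeftMono M]
    {s : Finset ι} {f : ι → M} {c : M} {m : ℕ} (hc : 0 ≤ c) (hf : ∀ i ∈ s, c ≤ f i)
    (hsum : ∑ i ∈ s, f i < m • c) : s.card < m :=
  lt_of_not_ge fun hm =>
    ((nsmul_le_nsmul_left hc hm).trans (s.card_nsmul_le_sum f c hf)).not_gt hsum

variable {n k : ℕ} {B : M} {b : ℕ → M}

theorem card_le_of_subset_Ioc_of_sum_le [Preorder M] [AddLeftMono M]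
    (hnonneg : k < n → 0 ≤ b (k + 1)) (hmono : MonotoneOn b (Set.Ioc k n))
    (hk : k < n → B < (k + 1) • b (k + 1)) {T : Finset ℕ} (hT : T ⊆ Finset.Ioc k n)
    (hsum : ∑ i ∈ T, b i ≤ B) : T.card ≤ k := by
  rcases le_or_gt n k with hnk | hkn
  · simp [Finset.subset_empty.mp (Finset.Ioc_eq_empty_of_le hnk ▸ hT)]
  · have hle : ∀ i ∈ T, b (k + 1) ≤ b i := fun i hi =>
      have hiIoc := Finset.mem_Ioc.mp (hT hi)
      hmono ⟨k.lt_succ_self, hkn⟩ hiIoc hiIoc.1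
    exact Nat.lt_succ_iff.mp
      (card_lt_of_sum_lt_nsmul (hnonneg hkn) hle (hsum.trans_lt (hk hkn)))

theorem proportional_share_two_approx_general [LinearOrder M] [IsOrderedAddMonoid M]
    (hnonneg : ∀ i ∈ Set.Icc 1 n, 0 ≤ b i) (hmono : MonotoneOn b (Set.Icc 1 n))
    (hk : k ∈ upperBounds {j ∈ Set.Icc 1 n | j • b j ≤ B})
    {S : Finset ℕ} (hS : S ⊆ Finset.Icc 1 n) (hsum : ∑ i ∈ S, b i ≤ B) :
    S.card ≤ 2 * k := by
  have hIcc : ∀ i ∈ S, i ∈ Set.Icc 1 n := fun i hi => Finset.mem_Icc.mp (hS hi)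
  have hlow : (S.filter (· ≤ k)).card ≤ k := by
    have hsub : S.filter (· ≤ k) ⊆ Finset.Icc 1 k := fun i hi =>
      have ⟨hiS, hik⟩ := Finset.mem_filter.mp hi
      Finset.mem_Icc.mpr ⟨(hIcc i hiS).1, hik⟩
    simpa using Finset.card_le_card hsub
  have hhigh : (S.filter (¬ · ≤ k)).card ≤ k := by
    have hnext : k < n → k + 1 ∈ Set.Icc 1 n := fun hkn => ⟨Nat.le_add_left 1 k, hkn⟩
    refine card_le_of_subset_Ioc_of_sum_le (B := B) (fun hkn => hnonneg _ (hnext hkn))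
      (hmono.mono fun i hi => ⟨Nat.one_le_of_lt hi.1, hi.2⟩) (fun hkn => ?_) (fun i hi => ?_) ?_
    · exact lt_of_not_ge fun hle => k.not_succ_le_self (hk ⟨hnext hkn, hle⟩)
    · have ⟨hiS, hik⟩ := Finset.mem_filter.mp hi
      exact Finset.mem_Ioc.mpr ⟨not_le.mp hik, (hIcc i hiS).2⟩
    · exact (Finset.sum_le_sum_of_subset_of_nonneg (S.filter_subset _)
        fun i hi _ => hnonneg i (hIcc i hi)).trans hsum
  have hsplit := S.card_filter_add_card_filter_not (· ≤ k)
  omega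

end OrderedAddCommMonoid

/-- 2-approximation of the proportional share allocation rule:
with nondecreasing nonnegative bids `b 1 ≤ … ≤ b n`, budget `B ≥ 0`, and `k` the
largest index in `{1,…,n}` with `b k ≤ B / k` (`k = 0` if none exists), every
subset `S ⊆ {1,…,n}` whose bids sum to at most `B` has cardinality at most `2 * k`. -/
theorem proportional_share_two_approx
    (n k : ℕ) (B : ℝ) (b : ℕ → ℝ)
    (hB : 0 ≤ B)
    (hnonneg : ∀ i, 1 ≤ i → i ≤ n → 0 ≤ b i)
    (hmono : ∀ i j, 1 ≤ i → i ≤ j → j ≤ n → b i ≤ b j)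
    (hkn : k ≤ n)
    (hksat : 1 ≤ k → b k ≤ B / (k : ℝ))
    (hkmax : ∀ j, 1 ≤ j → j ≤ n → b j ≤ B / (j : ℝ) → j ≤ k) :
    ∀ S : Finset ℕ, S ⊆ Finset.Icc 1 n → (∑ i ∈ S, b i) ≤ B → S.card ≤ 2 * k := by
  intro S hS hsum
  have hk : k ∈ upperBounds {j ∈ Set.Icc 1 n | j • b j ≤ B} := fun j ⟨hj, hle⟩ =>
    hkmax j hj.1 hj.2 <|
      (le_div_iff₀' (Nat.cast_pos.mpr hj.1)).mpr (nsmul_eq_mul j (b j) ▸ hle)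
  exact proportional_share_two_approx_general (fun i hi => hnonneg i hi.1 hi.2)
    (fun i hi j hj hij => hmono i j hi.1 hij hj.2) hk hS hsum
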